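/- (Tempering Kernel) Assume f satisfies (A1)–(A3), fix χ > 0 and ε > 0. For every x̂ ∈ NUE*_χ, lim_{n→−∞} (1/|n|) log Q_ε(f̂^n(x̂)) = 0. -/

import Mathlib

open Real MeasureTheory Filter Topology Metric Set

noncomputable section

namespace OneDim

/-- The interval `M = [0, 1/2]`. -/
def Mset : Set ℝ := Set.Icc 0 (1/2)

/-- Data of a piecewise `C^{1+β}` interval map `f : M → M` with discontinuity set `D`,
constants `β ∈ (0,1)`, `a, K > 1`, radius function `r` and inverse branches `g`. -/
structure GoodMap where
  f : ℝ → ℝ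
  D : Set ℝ
  β : ℝ
  a : ℝ
  K : ℝ
  r : ℝ → ℝ
  g : ℝ → ℝ → ℝ
  hβ0 : 0 < β
  hβ1 : β < 1
  ha : 1 < a
  hK : 1 < K
  hmaps : ∀ x ∈ Mset, f x ∈ Mset
  hD : D ⊆ Mset
  hdiff : DifferentiableOn ℝ f (Mset \ D)

namespace GoodMap

/-- The critical set `C = {x ∈ M \ D : df_x = 0}`. -/
def crit (F : GoodMap) : Set ℝ := {x | x ∈ Mset \ F.D ∧ deriv F.f x = 0}

/-- The singular set `S = C ∪ D`. -/
def S (F : GoodMap) : Set ℝ := F.crit ∪ F.D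

/-- Distance to the singular set. -/
def dS (F : GoodMap) (x : ℝ) : ℝ := Metric.infDist x F.S

/-- Conditions (A1)–(A3). -/
def SatA (F : GoodMap) : Prop :=
  ∀ x ∈ Mset, x ∉ F.S → F.f x ∉ F.S →
    (min (F.dS x ^ F.a) (F.dS (F.f x) ^ F.a) < F.r x ∧ F.r x < 1) ∧
    -- (A1)
    (Set.InjOn F.f (Metric.ball x (2 * F.r x)) ∧
      (∀ y ∈ Metric.ball x (2 * F.r x), DifferentiableAt ℝ F.f y) ∧
      F.g x (F.f x) = x ∧
      (∀ z ∈ Metric.ball (F.f x) (2 * F.r x), F.f (F.g x z) = z) ∧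
      Set.InjOn (F.g x) (Metric.ball (F.f x) (2 * F.r x)) ∧
      (∀ z ∈ Metric.ball (F.f x) (2 * F.r x), DifferentiableAt ℝ (F.g x) z)) ∧
    -- (A2)
    ((∀ y ∈ Metric.ball x (2 * F.r x),
        F.dS x ^ F.a ≤ |deriv F.f y| ∧ |deriv F.f y| ≤ F.dS x ^ (-F.a)) ∧
      (∀ z ∈ Metric.ball (F.f x) (2 * F.r x),
        F.dS x ^ F.a ≤ |deriv (F.g x) z| ∧ |deriv (F.g x) z| ≤ F.dS x ^ (-F.a))) ∧
    -- (A3)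
    ((∀ y ∈ Metric.ball x (2 * F.r x), ∀ z ∈ Metric.ball x (2 * F.r x),
        |deriv F.f y - deriv F.f z| ≤ F.K * |y - z| ^ F.β) ∧
      (∀ y ∈ Metric.ball (F.f x) (2 * F.r x), ∀ z ∈ Metric.ball (F.f x) (2 * F.r x),
        |deriv (F.g x) y - deriv (F.g x) z| ≤ F.K * |y - z| ^ F.β))

end GoodMap

/-- Membership in the natural extension space `M̂`. -/
def inMhat (f : ℝ → ℝ) (x : ℤ → ℝ) : Prop :=
  (∀ n, x n ∈ Mset) ∧ ∀ n : ℤ, f (x (n - 1)) = x n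

/-- The natural extension map `f̂` (left shift). -/
def fhat (x : ℤ → ℝ) : ℤ → ℝ := fun n => x (n + 1)

/-- Iterate `f̂^k` of the natural extension map, `k ∈ ℤ`. -/
def fhatI (k : ℤ) (x : ℤ → ℝ) : ℤ → ℝ := fun n => x (n + k)

/-- The metric `d̂(x̂,ŷ) = sup{2^n d(x_n,y_n) : n ≤ 0}` on `M̂`. -/
def dhat (x y : ℤ → ℝ) : ℝ :=
  sSup {t : ℝ | ∃ n : ℤ, n ≤ 0 ∧ t = (2:ℝ) ^ n * |x n - y n|}

/-- The invertible derivative cocycle `d̂f^{(n)}` over `f̂`. -/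
def dfhat (f : ℝ → ℝ) (x : ℤ → ℝ) (n : ℤ) : ℝ :=
  if 0 ≤ n then ∏ j ∈ Finset.range n.toNat, deriv f (x (j : ℤ))
  else (∏ j ∈ Finset.range (-n).toNat, deriv f (x (-(j : ℤ) - 1)))⁻¹

/-- The Pesin parameter `u(x̂)`. -/
def uPes (f : ℝ → ℝ) (χ : ℝ) (x : ℤ → ℝ) : ℝ :=
  Real.sqrt (∑' n : ℕ, Real.exp (2 * (n:ℝ) * χ) * (dfhat f x (-(n:ℤ))) ^ 2)

/-- The Pesin chart `Ψ_{x̂}(t) = t/u(x̂) + x₀`. -/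
def Psi (f : ℝ → ℝ) (χ : ℝ) (x : ℤ → ℝ) (t : ℝ) : ℝ := t / uPes f χ x + x 0

/-- The set `NUE_χ`. -/
def NUE (F : GoodMap) (χ : ℝ) : Set (ℤ → ℝ) :=
  {x | inMhat F.f x ∧ (∀ n, x n ∉ F.S) ∧
    (∃ l > χ, Tendsto (fun n : ℕ => Real.log |dfhat F.f x (n:ℤ)| / (n:ℝ)) atTop (𝓝 l)) ∧
    (∃ l > χ, Tendsto (fun n : ℕ => Real.log |dfhat F.f x (-(n:ℤ))| / (-(n:ℝ))) atTop (𝓝 l))}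

/-- `ρ(x̂) = d({x₋₁,x₀,x₁}, S)`. -/
def rho (F : GoodMap) (x : ℤ → ℝ) : ℝ :=
  min (F.dS (x (-1))) (min (F.dS (x 0)) (F.dS (x 1)))

/-- `I_ε = {e^{-εn/3} : n ≥ 0}`. -/
def Ieps (ε : ℝ) : Set ℝ := {q | ∃ n : ℕ, q = Real.exp (-(ε * n) / 3)}

/-- `Q̃_ε(x̂)`. -/
def Qtilde (F : GoodMap) (χ ε : ℝ) (x : ℤ → ℝ) : ℝ :=
  ε ^ (3 / F.β) *
    min (uPes F.f χ x ^ (-(24 / F.β)))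
      (uPes F.f χ (fhatI (-1) x) ^ (-(12 / F.β)) * rho F x ^ (72 * F.a / F.β))

/-- `Q_ε(x̂) = max{q ∈ I_ε : q ≤ Q̃_ε(x̂)}`. -/
def Qeps (F : GoodMap) (χ ε : ℝ) (x : ℤ → ℝ) : ℝ :=
  sSup {q | q ∈ Ieps ε ∧ q ≤ Qtilde F χ ε x}

/-- The regular set. -/
def Reg (F : GoodMap) : Set (ℤ → ℝ) :=
  {x | inMhat F.f x ∧ (∀ n, x n ∉ F.S) ∧
    Tendsto (fun n : ℕ => Real.log (F.dS (x (n:ℤ))) / (n:ℝ)) atTop (𝓝 0) ∧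
    Tendsto (fun n : ℕ => Real.log (F.dS (x (-(n:ℤ)))) / (n:ℝ)) atTop (𝓝 0)}

/-- The set `NUE*_χ`. -/
def NUEstar (F : GoodMap) (χ : ℝ) : Set (ℤ → ℝ) :=
  {x | x ∈ NUE F χ ∧ x ∈ Reg F ∧
    (∃ nk : ℕ → ℤ, Tendsto nk atTop atBot ∧
      Tendsto (fun k => uPes F.f χ (fhatI (nk k) x)) atTop (𝓝 (uPes F.f χ x))) ∧
    Tendsto (fun n : ℕ => Real.log (uPes F.f χ (fhatI (-(n:ℤ)) x)) / (-(n:ℝ))) atTop (𝓝 0)}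

/-- An ε-chart is a pair `(x̂, p)`, representing `Ψ_{x̂}` restricted to `[-p,p]`. -/
structure Chart where
  x : ℤ → ℝ
  p : ℝ

/-- `(x̂, p)` is a genuine ε-chart. -/
def IsChart (F : GoodMap) (χ ε : ℝ) (c : Chart) : Prop :=
  c.x ∈ NUE F χ ∧ 0 < c.p ∧ c.p ≤ Qeps F χ ε c.x

/-- ε-overlap of two ε-charts. -/
def Overlap (F : GoodMap) (χ ε : ℝ) (c₁ c₂ : Chart) : Prop :=
  Real.exp (-ε) ≤ c₁.p / c₂.p ∧ c₁.p / c₂.p ≤ Real.exp ε ∧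
  |c₁.x 0 - c₂.x 0| + |(uPes F.f χ c₁.x)⁻¹ - (uPes F.f χ c₂.x)⁻¹| < (c₁.p * c₂.p) ^ 4

/-- `g_{x̂} = g_{x₋₁}`, the inverse branch of `f` taking `x₀` to `x₋₁`. -/
def ghat (F : GoodMap) (x : ℤ → ℝ) : ℝ → ℝ := F.g (x (-1))

/-- `G_{x̂} = Ψ_{f̂⁻¹x̂}⁻¹ ∘ g_{x̂} ∘ Ψ_{x̂}`. -/
def Gmap (F : GoodMap) (χ : ℝ) (x : ℤ → ℝ) (t : ℝ) : ℝ :=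
  uPes F.f χ (fhatI (-1) x) * (ghat F x (Psi F.f χ x t) - x (-1))

/-- `G_{x̂,ŷ} = Ψ_{ŷ}⁻¹ ∘ g_{x̂} ∘ Ψ_{x̂}`. -/
def Gmap2 (F : GoodMap) (χ : ℝ) (x y : ℤ → ℝ) (t : ℝ) : ℝ :=
  uPes F.f χ y * (ghat F x (Psi F.f χ x t) - y 0)

/-- `F_{x̂} = Ψ_{f̂x̂}⁻¹ ∘ f ∘ Ψ_{x̂}`. -/
def Fmap (F : GoodMap) (χ : ℝ) (x : ℤ → ℝ) (t : ℝ) : ℝ :=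
  uPes F.f χ (fhat x) * (F.f (Psi F.f χ x t) - x 1)

/-- `δ_ε = e^{-εn}` where `n` is the unique positive integer with `e^{-εn} < ε ≤ e^{-ε(n-1)}`. -/
def deltaEps (ε : ℝ) : ℝ :=
  Real.exp (-(ε * ((⌊Real.log (1 / ε) / ε⌋ + 1 : ℤ) : ℝ)))

/-- Weak edge `v ⤎ w` (from `w = Ψ_{x̂}^p` to `v = Ψ_{ŷ}^q`). -/
def WeakEdge (F : GoodMap) (χ ε : ℝ) (v w : Chart) : Prop :=
  IsChart F χ ε v ∧ IsChart F χ ε w ∧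
  Overlap F χ ε ⟨fhatI (-1) w.x, v.p⟩ v ∧
  w.p ≤ Real.exp ε * v.p

/-- Edge `v ← w` (from `w = Ψ_{x̂}^p` to `v = Ψ_{ŷ}^q`). -/
def Edge (F : GoodMap) (χ ε : ℝ) (v w : Chart) : Prop :=
  IsChart F χ ε v ∧ IsChart F χ ε w ∧
  Overlap F χ ε ⟨fhatI (-1) w.x, v.p⟩ v ∧
  |v.x 1 - w.x 0| < v.p ∧
  Real.exp (-v.p) ≤ uPes F.f χ (fhat v.x) / uPes F.f χ w.x ∧
  uPes F.f χ (fhat v.x) / uPes F.f χ w.x ≤ Real.exp v.p ∧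
  w.p = min (Real.exp ε * v.p) (deltaEps ε * Qeps F χ ε w.x)

/-- ε-generalized pseudo-orbit. -/
def IsGPO (F : GoodMap) (χ ε : ℝ) (v : ℤ → Chart) : Prop :=
  ∀ n : ℤ, Edge F χ ε (v n) (v (n + 1))

/-- weak ε-generalized pseudo-orbit. -/
def IsWeakGPO (F : GoodMap) (χ ε : ℝ) (v : ℤ → Chart) : Prop :=
  ∀ n : ℤ, WeakEdge F χ ε (v n) (v (n + 1))

/-- The range `Ψ_{x̂}([-p,p])` of an ε-chart. -/
def chartRange (F : GoodMap) (χ : ℝ) (c : Chart) : Set ℝ :=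
  Psi F.f χ c.x '' Set.Icc (-c.p) c.p

/-- A bi-infinite sequence of ε-charts shadows `x̂ ∈ M̂`. -/
def Shadows (F : GoodMap) (χ : ℝ) (v : ℤ → Chart) (x : ℤ → ℝ) : Prop :=
  inMhat F.f x ∧ ∀ n : ℤ, x n ∈ chartRange F χ (v n)

/-- `q_ε(x̂) = δ_ε inf{e^{ε|m|} Q_ε(f̂^m x̂) : m ≤ 0}`. -/
def qeps (F : GoodMap) (χ ε : ℝ) (x : ℤ → ℝ) : ℝ :=
  deltaEps ε *
    sInf {t : ℝ | ∃ m : ℤ, m ≤ 0 ∧ t = Real.exp (ε * |(m:ℝ)|) * Qeps F χ ε (fhatI m x)}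

/-- Recurrence: some symbol repeats infinitely often in the future and some in the past. -/
def Recurrent {V : Type*} (v : ℤ → V) : Prop :=
  (∃ c, {n : ℤ | 0 < n ∧ v n = c}.Infinite) ∧ ∃ c, {n : ℤ | n < 0 ∧ v n = c}.Infinite

/-- The distance `d(v,w) = exp(-min{|n| : v_n ≠ w_n})` on sequence spaces. -/
def dSigma {V : Type*} (v w : ℤ → V) : ℝ :=
  sSup {t : ℝ | ∃ n : ℤ, v n ≠ w n ∧ t = Real.exp (-|(n:ℝ)|)}

/-- Sup norm over a set. -/
def supNorm (h : ℝ → ℝ) (I : Set ℝ) : ℝ := sSup ((fun t => |h t|) '' I)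

/-- Hölder constant over a set. -/
def holConst (γ : ℝ) (h : ℝ → ℝ) (I : Set ℝ) : ℝ :=
  sSup {r : ℝ | ∃ t ∈ I, ∃ s ∈ I, t ≠ s ∧ r = |h t - h s| / |t - s| ^ γ}

/-! Write `Q̃_ε(f̂⁻ⁿx̂)` in terms of the backward orbit: it is built from constants, `u(f̂⁻ⁿx̂)`,
`u(f̂⁻ⁿ⁻¹x̂)` and the distances of `x₋ₙ₋₁, x₋ₙ, x₋ₙ₊₁` to `S` by products, real powers and minima.
Positive sequences `φ` with `log φ(n) / n → 0` are stable under these operations and under index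
shifts, and `Q_ε` agrees with `min 1 Q̃_ε` up to the factor `e^{ε/3}`, the ratio of the geometric
progression `I_ε`. Finiteness of `u` at `x̂` follows from the backward exponent exceeding `χ`, and
propagates along the backward orbit because the summands of `u(x̂)²` are multiplicative over
shifts. -/

section Tempered

/-- A tempered sequence: eventually positive and subexponential, in the sense that
`log φ(n) / n → 0`. Positivity keeps the limit meaningful, since `Real.log` is `log |·|` with
`log 0 = 0`. -/
structure Tempered (φ : ℕ → ℝ) : Prop where
  eventually_pos : ∀ᶠ n in atTop, 0 < φ n
  tendsto_log_div : Tendsto (fun n : ℕ => Real.log (φ n) / (n : ℝ)) atTop (𝓝 0)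

variable {φ ψ θ : ℕ → ℝ}

theorem tempered_const {c : ℝ} (hc : 0 < c) : Tempered fun _ => c :=
  ⟨.of_forall fun _ => hc, tendsto_const_div_atTop_nhds_zero_nat _⟩

namespace Tempered

theorem mul (hφ : Tempered φ) (hψ : Tempered ψ) : Tempered fun n => φ n * ψ n where
  eventually_pos := by
    filter_upwards [hφ.eventually_pos, hψ.eventually_pos] with n h₁ h₂ using mul_pos h₁ h₂
  tendsto_log_div := by
    rw [← add_zero (0 : ℝ)]
    refine (hφ.tendsto_log_div.add hψ.tendsto_log_div).congr' ?_
    filter_upwards [hφ.eventually_pos, hψ.eventually_pos] with n h₁ h₂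
    rw [Real.log_mul h₁.ne' h₂.ne', add_div]

theorem rpow (hφ : Tempered φ) (c : ℝ) : Tempered fun n => φ n ^ c where
  eventually_pos := by
    filter_upwards [hφ.eventually_pos] with n h using Real.rpow_pos_of_pos h c
  tendsto_log_div := by
    rw [← mul_zero c]
    refine (hφ.tendsto_log_div.const_mul c).congr' ?_
    filter_upwards [hφ.eventually_pos] with n h
    rw [Real.log_rpow h, mul_div_assoc]

protected theorem min (hφ : Tempered φ) (hψ : Tempered ψ) : Tempered fun n => min (φ n) (ψ n) where
  eventually_pos := by
    filter_upwards [hφ.eventually_pos, hψ.eventually_pos] with n h₁ h₂ using lt_min h₁ h₂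
  tendsto_log_div := by
    rw [← min_self (0 : ℝ)]
    refine (hφ.tendsto_log_div.min hψ.tendsto_log_div).congr' ?_
    filter_upwards [hφ.eventually_pos, hψ.eventually_pos] with n h₁ h₂
    rw [min_div_div_right n.cast_nonneg, Real.strictMonoOn_log.monotoneOn.map_min h₁ h₂]

theorem of_le_of_le (hφ : Tempered φ) (hψ : Tempered ψ) (hφθ : ∀ᶠ n in atTop, φ n ≤ θ n)
    (hθψ : ∀ᶠ n in atTop, θ n ≤ ψ n) : Tempered θ where
  eventually_pos := by
    filter_upwards [hφ.eventually_pos, hφθ] with n h₁ h₂ using h₁.trans_le h₂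
  tendsto_log_div := by
    refine tendsto_of_tendsto_of_tendsto_of_le_of_le' hφ.tendsto_log_div hψ.tendsto_log_div ?_ ?_
    · filter_upwards [hφ.eventually_pos, hφθ] with n h₁ h₂
      gcongr
    · filter_upwards [hφ.eventually_pos, hφθ, hθψ] with n h₁ h₂ h₃
      have := h₁.trans_le h₂
      gcongr

end Tempered

theorem tempered_add_iff_nat (k : ℕ) : Tempered (fun n => φ (n + k)) ↔ Tempered φ := by
  have hratio : Tendsto (fun n : ℕ => (n : ℝ) / (n + k)) atTop (𝓝 1) :=
    tendsto_natCast_div_add_atTop (k : ℝ)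
  have hratio' : Tendsto (fun n : ℕ => ((n : ℝ) + k) / n) atTop (𝓝 1) := by
    simpa only [inv_div, inv_one] using hratio.inv₀ one_ne_zero
  have hlog : Tendsto (fun n : ℕ => Real.log (φ (n + k)) / (n : ℝ)) atTop (𝓝 0) ↔
      Tendsto (fun n : ℕ => Real.log (φ (n + k)) / ((n + k : ℕ) : ℝ)) atTop (𝓝 0) := by
    constructor <;> intro h <;> rw [← zero_mul (1 : ℝ)]
    · refine (h.mul hratio).congr' ?_
      filter_upwards [eventually_gt_atTop 0] with n hn
      push_cast
      field_simp
    · refine (h.mul hratio').congr' ?_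
      filter_upwards [eventually_gt_atTop 0] with n hn
      push_cast
      field_simp
  constructor
  · rintro ⟨hpos, hlim⟩
    refine ⟨?_, (tendsto_add_atTop_iff_nat k).1 (hlog.1 hlim)⟩
    rwa [← map_add_atTop_eq_nat k, eventually_map]
  · rintro ⟨hpos, hlim⟩
    exact ⟨(tendsto_add_atTop_nat k).eventually hpos,
      hlog.2 ((tendsto_add_atTop_iff_nat k).2 hlim)⟩

end Tempered

section SingularSet

namespace GoodMap

variable {F : GoodMap} {y : ℝ}

theorem deriv_ne_zero (hy : y ∈ Mset) (hyS : y ∉ F.S) : deriv F.f y ≠ 0 := fun h =>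
  hyS (Or.inl ⟨⟨hy, fun hD => hyS (Or.inr hD)⟩, h⟩)

theorem dS_nonneg (F : GoodMap) (y : ℝ) : 0 ≤ F.dS y :=
  Metric.infDist_nonneg

theorem SatA.dS_pos (hA : F.SatA) (hy : y ∈ Mset) (hyS : y ∉ F.S) (hfyS : F.f y ∉ F.S) :
    0 < F.dS y := by
  obtain ⟨⟨hr, -⟩, -, ⟨hderiv, -⟩, -⟩ := hA y hy hyS hfyS
  have hr_pos : 0 < F.r y :=
    (le_min (Real.rpow_nonneg (F.dS_nonneg _) _) (Real.rpow_nonneg (F.dS_nonneg _) _)).trans_lt hr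
  refine (F.dS_nonneg y).lt_of_ne' fun h0 => deriv_ne_zero hy hyS ?_
  -- `0 ^ (-a) = 0` in Lean, so the upper bound of (A2) kills the derivative when `d(y, S) = 0`.
  have hle : |deriv F.f y| ≤ F.dS y ^ (-F.a) :=
    (hderiv y (Metric.mem_ball_self (by positivity))).2
  rw [h0, Real.zero_rpow (neg_ne_zero.2 (one_pos.trans F.ha).ne')] at hle
  exact abs_nonpos_iff.1 hle

end GoodMap

end SingularSet

section PesinParameter

variable {f : ℝ → ℝ} {χ : ℝ} {x : ℤ → ℝ}

theorem fhatI_fhatI (k l : ℤ) (x : ℤ → ℝ) : fhatI k (fhatI l x) = fhatI (k + l) x :=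
  funext fun n => congrArg x (add_assoc n k l)

theorem dfhat_neg_natCast (f : ℝ → ℝ) (x : ℤ → ℝ) (n : ℕ) :
    dfhat f x (-(n : ℤ)) = (∏ j ∈ Finset.range n, deriv f (x (-(j : ℤ) - 1)))⁻¹ := by
  rcases n.eq_zero_or_pos with rfl | hn
  · simp [dfhat]
  · rw [dfhat, if_neg (by omega), neg_neg, Int.toNat_natCast]

theorem dfhat_neg_natCast_add (f : ℝ → ℝ) (x : ℤ → ℝ) (k n : ℕ) :
    dfhat f x (-((k + n : ℕ) : ℤ)) =
      dfhat f x (-(k : ℤ)) * dfhat f (fhatI (-(k : ℤ)) x) (-(n : ℤ)) := by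
  have hindex (j : ℕ) : -((k + j : ℕ) : ℤ) - 1 = -(j : ℤ) - 1 + -(k : ℤ) := by
    push_cast
    ring
  simp only [dfhat_neg_natCast, Finset.prod_range_add, mul_inv, fhatI, hindex]

theorem dfhat_neg_natCast_ne_zero (hx : ∀ m < 0, deriv f (x m) ≠ 0) (n : ℕ) :
    dfhat f x (-(n : ℤ)) ≠ 0 := by
  rw [dfhat_neg_natCast]
  exact inv_ne_zero (Finset.prod_ne_zero_iff.2 fun j _ => hx _ (by omega))

/-- The summand `e^{2nχ} |d̂f^{(-n)}|²` of the series defining `u(x̂)²`. -/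
def uTerm (f : ℝ → ℝ) (χ : ℝ) (x : ℤ → ℝ) (n : ℕ) : ℝ :=
  Real.exp (2 * (n : ℝ) * χ) * dfhat f x (-(n : ℤ)) ^ 2

theorem uTerm_zero : uTerm f χ x 0 = 1 := by
  simp [uTerm, dfhat]

theorem uTerm_nonneg (n : ℕ) : 0 ≤ uTerm f χ x n := by
  unfold uTerm
  positivity

theorem uTerm_add (k n : ℕ) :
    uTerm f χ x (k + n) = uTerm f χ x k * uTerm f χ (fhatI (-(k : ℤ)) x) n := by
  have hexp : Real.exp (2 * ((k + n : ℕ) : ℝ) * χ) =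
      Real.exp (2 * (k : ℝ) * χ) * Real.exp (2 * (n : ℝ) * χ) := by
    rw [← Real.exp_add]
    push_cast
    ring_nf
  simp only [uTerm, hexp, dfhat_neg_natCast_add]
  ring

theorem uPes_pos (hx : Summable (uTerm f χ x)) : 0 < uPes f χ x :=
  Real.sqrt_pos.2 (hx.tsum_pos uTerm_nonneg 0 (uTerm_zero.symm ▸ one_pos))

theorem summable_uTerm_fhatI_neg (hx : Summable (uTerm f χ x)) {k : ℕ}
    (hk : dfhat f x (-(k : ℤ)) ≠ 0) : Summable (uTerm f χ (fhatI (-(k : ℤ)) x)) := by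
  have hterm : uTerm f χ x k ≠ 0 := mul_ne_zero (Real.exp_ne_zero _) (pow_ne_zero 2 hk)
  rw [← summable_mul_left_iff hterm]
  simpa only [← uTerm_add, add_comm k] using (summable_nat_add_iff k).2 hx

theorem summable_exp_mul_sq_of_tendsto_log_div {a : ℕ → ℝ} {l : ℝ} (hl : χ < l)
    (ha : Tendsto (fun n : ℕ => Real.log |a n| / (-(n : ℝ))) atTop (𝓝 l)) :
    Summable fun n : ℕ => Real.exp (2 * (n : ℝ) * χ) * a n ^ 2 := by
  obtain ⟨c, hχc, hcl⟩ := exists_between hl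
  have hgeom : Summable fun n : ℕ => Real.exp ((n : ℝ) * (2 * (χ - c))) :=
    Real.summable_exp_nat_mul_iff.2 (by linarith)
  refine hgeom.of_norm_bounded_eventually_nat ?_
  filter_upwards [ha.eventually (lt_mem_nhds hcl), eventually_gt_atTop 0] with n hn hn0
  have hlog : Real.log |a n| ≤ -(c * n) := by
    rw [div_neg, lt_neg, div_lt_iff₀ (by positivity)] at hn
    linarith
  have habs : |a n| ≤ Real.exp (-(c * n)) := (Real.le_exp_log _).trans (Real.exp_le_exp.2 hlog)
  rw [Real.norm_of_nonneg (by positivity), ← sq_abs]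
  calc Real.exp (2 * (n : ℝ) * χ) * |a n| ^ 2
      ≤ Real.exp (2 * (n : ℝ) * χ) * Real.exp (-(c * n)) ^ 2 := by gcongr
    _ = Real.exp ((n : ℝ) * (2 * (χ - c))) := by
        rw [← Real.exp_nat_mul, ← Real.exp_add]
        push_cast
        ring_nf

theorem uPes_fhatI_neg_pos {F : GoodMap} (hx : x ∈ NUE F χ) (k : ℕ) :
    0 < uPes F.f χ (fhatI (-(k : ℤ)) x) := by
  obtain ⟨hM, hS, -, l, hl, hlim⟩ := hx
  exact uPes_pos (summable_uTerm_fhatI_neg (summable_exp_mul_sq_of_tendsto_log_div hl hlim)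
    (dfhat_neg_natCast_ne_zero (fun m _ => GoodMap.deriv_ne_zero (hM.1 m) (hS m)) k))

end PesinParameter

section Discretization

variable {F : GoodMap} {χ ε t : ℝ} {x : ℤ → ℝ}

theorem exists_mem_Ieps_between (hε : 0 < ε) (ht : 0 < t) :
    ∃ q ∈ Ieps ε, Real.exp (-(ε / 3)) * min 1 t ≤ q ∧ q ≤ t := by
  obtain ⟨n, hlt, hle⟩ := exists_nat_pow_near_of_lt_one (lt_min one_pos ht) (min_le_left 1 t)
    (Real.exp_pos (-(ε / 3))) (Real.exp_lt_one_iff.2 (by linarith))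
  refine ⟨Real.exp (-(ε / 3)) ^ (n + 1), ⟨n + 1, ?_⟩, ?_, hlt.le.trans (min_le_right 1 t)⟩
  · rw [← Real.exp_nat_mul]
    push_cast
    ring_nf
  · rw [pow_succ']
    gcongr

theorem le_one_of_mem_Ieps (hε : 0 ≤ ε) {q : ℝ} (hq : q ∈ Ieps ε) : q ≤ 1 := by
  obtain ⟨n, rfl⟩ := hq
  rw [Real.exp_le_one_iff, neg_div, neg_nonpos]
  positivity

theorem exp_mul_min_Qtilde_le_Qeps (hε : 0 < ε) (hQ : 0 < Qtilde F χ ε x) :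
    Real.exp (-(ε / 3)) * min 1 (Qtilde F χ ε x) ≤ Qeps F χ ε x := by
  obtain ⟨q, hqI, hle, hqQ⟩ := exists_mem_Ieps_between hε hQ
  exact hle.trans (le_csSup ⟨1, fun p hp => le_one_of_mem_Ieps hε.le hp.1⟩ ⟨hqI, hqQ⟩)

theorem Qeps_le_one (hε : 0 ≤ ε) : Qeps F χ ε x ≤ 1 :=
  Real.sSup_le (fun _ hq => le_one_of_mem_Ieps hε hq.1) zero_le_one

end Discretization

section BackwardOrbit

variable {F : GoodMap} {χ ε : ℝ} {x : ℤ → ℝ}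

theorem tempered_rho (hd : Tempered fun n : ℕ => F.dS (x (-(n : ℤ)))) :
    Tempered fun n : ℕ => rho F (fhatI (-(n : ℤ)) x) := by
  have hprev : Tempered fun n : ℕ => F.dS (fhatI (-(n : ℤ)) x (-1)) := by
    convert (tempered_add_iff_nat 1).2 hd using 4 with n
    simp [fhatI, neg_add_rev]
  have hcur : Tempered fun n : ℕ => F.dS (fhatI (-(n : ℤ)) x 0) := by
    simpa only [fhatI, zero_add] using hd
  have hnext : Tempered fun n : ℕ => F.dS (fhatI (-(n : ℤ)) x 1) := by
    rw [← tempered_add_iff_nat 1]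
    convert hd using 4 with n
    simp [fhatI]
  exact hprev.min (hcur.min hnext)

theorem tempered_Qtilde (hε : 0 < ε)
    (hu : Tempered fun n : ℕ => uPes F.f χ (fhatI (-(n : ℤ)) x))
    (hd : Tempered fun n : ℕ => F.dS (x (-(n : ℤ)))) :
    Tempered fun n : ℕ => Qtilde F χ ε (fhatI (-(n : ℤ)) x) := by
  have hu_prev : Tempered fun n : ℕ => uPes F.f χ (fhatI (-1) (fhatI (-(n : ℤ)) x)) := by
    simpa only [fhatI_fhatI, Nat.cast_add, Nat.cast_one, neg_add_rev] using
      (tempered_add_iff_nat 1).2 hu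
  exact (tempered_const (Real.rpow_pos_of_pos hε _)).mul
    ((hu.rpow _).min ((hu_prev.rpow _).mul ((tempered_rho hd).rpow _)))

theorem tempered_uPes (hx : x ∈ NUE F χ)
    (hlim : Tendsto (fun n : ℕ => Real.log (uPes F.f χ (fhatI (-(n : ℤ)) x)) / (-(n : ℝ)))
      atTop (𝓝 0)) :
    Tempered fun n : ℕ => uPes F.f χ (fhatI (-(n : ℤ)) x) where
  eventually_pos := .of_forall (uPes_fhatI_neg_pos hx)
  tendsto_log_div := by simpa only [div_neg, neg_neg, neg_zero] using hlim.neg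

theorem tempered_dS (hA : F.SatA) (hx : x ∈ Reg F) :
    Tempered fun n : ℕ => F.dS (x (-(n : ℤ))) where
  eventually_pos := .of_forall fun n => by
    have hf : F.f (x (-(n : ℤ))) = x (-(n : ℤ) + 1) := by
      simpa only [add_sub_cancel_right] using hx.1.2 (-(n : ℤ) + 1)
    exact hA.dS_pos (hx.1.1 _) (hx.2.1 _) (hf ▸ hx.2.1 _)
  tendsto_log_div := hx.2.2.2

end BackwardOrbit

/- A divergent series would give the junk value `u = 0`, so `hu` includes the finiteness of `u`. -/
theorem tempering_kernel_general {F : GoodMap} {χ ε : ℝ} (hε : 0 < ε) {x : ℤ → ℝ}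
    (hu : Tempered fun n : ℕ => uPes F.f χ (fhatI (-(n : ℤ)) x))
    (hd : Tempered fun n : ℕ => F.dS (x (-(n : ℤ)))) :
    Tempered fun n : ℕ => Qeps F χ ε (fhatI (-(n : ℤ)) x) := by
  have hQ := tempered_Qtilde hε hu hd
  have hlower := (tempered_const (Real.exp_pos (-(ε / 3)))).mul
    ((tempered_const one_pos).min hQ)
  refine hlower.of_le_of_le (tempered_const one_pos) ?_ (.of_forall fun _ => Qeps_le_one hε.le)
  filter_upwards [hQ.eventually_pos] with n hn using exp_mul_min_Qtilde_le_Qeps hε hn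

/-- Tempering Kernel Lemma. -/
theorem tempering_kernel (F : GoodMap) (hA : F.SatA) (χ : ℝ) (hχ : 0 < χ)
    (ε : ℝ) (hε : 0 < ε) (x : ℤ → ℝ) (hx : x ∈ NUEstar F χ) :
    Tendsto (fun n : ℕ => Real.log (Qeps F χ ε (fhatI (-(n:ℤ)) x)) / (n:ℝ)) atTop (𝓝 0) :=
  (tempering_kernel_general hε (tempered_uPes hx.1 hx.2.2.2)
    (tempered_dS hA hx.2.1)).tendsto_log_div

end OneDim
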